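/- Every A-orbit in X with compact closure is closed (and hence compact) if and only if every compact A-minimal subset of X is a single compact A-orbit. -/

import Mathlib

open Matrix MeasureTheory Pointwise

/-- `G = SL_n(ℝ)`. -/
abbrev SLR (n : ℕ) := Matrix.SpecialLinearGroup (Fin n) ℝ

/-- The standard topology on `SL_n(ℝ)`, as a subspace of the matrices. -/
instance (n : ℕ) : TopologicalSpace (SLR n) :=
  inferInstanceAs (TopologicalSpace {A : Matrix (Fin n) (Fin n) ℝ // A.det = 1})

/-- `Γ = SL_n(ℤ)`, viewed as a subgroup of `SL_n(ℝ)`. -/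
def GammaZ (n : ℕ) : Subgroup (SLR n) :=
  (Matrix.SpecialLinearGroup.map (n := Fin n) (Int.castRingHom ℝ)).range

/-- `A`: the set of diagonal matrices in `SL_n(ℝ)` with positive diagonal entries. -/
def posDiag (n : ℕ) : Set (SLR n) :=
  {g | (∀ i j, i ≠ j → g.1 i j = 0) ∧ (∀ i, 0 < g.1 i i)}

/-- `A_α`: the kernel of the root `α = α_{ij}`, `α(a) = a_{ii}/a_{jj}`, i.e. the set of
`a ∈ A` with `a_{ii} = a_{jj}`. -/
def rootKer (n : ℕ) (i j : Fin n) : Set (SLR n) :=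
  {g | g ∈ posDiag n ∧ g.1 i i = g.1 j j}

/-- `u_α(s) = I + s E_{ij}`, an element of the root group `U_α`. -/
noncomputable def elemU (n : ℕ) {i j : Fin n} (hij : i ≠ j) (s : ℝ) : SLR n :=
  ⟨Matrix.transvection i j s, Matrix.det_transvection_of_ne i j hij s⟩

/-- A nonempty subset `Z` is `S`-minimal if it is invariant under each element of `S`
and every `S`-orbit of a point of `Z` is dense in `Z`. -/
def IsMinimalOn {G X : Type*} [SMul G X] [TopologicalSpace X] (S : Set G) (Z : Set X) : Prop :=
  Z.Nonempty ∧ (∀ g ∈ S, (g • ·) '' Z = Z) ∧ ∀ z ∈ Z, Z ⊆ closure ((· • z) '' S)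

/-- `Γ` is a lattice in `G`: a discrete subgroup such that `G/Γ` carries a (nonzero)
finite `G`-invariant Borel measure. -/
def IsLattice {G : Type*} [Group G] [TopologicalSpace G] (Γ : Subgroup G) : Prop :=
  DiscreteTopology Γ ∧
    ∃ μ : @Measure (G ⧸ Γ) (borel _),
      μ Set.univ ≠ 0 ∧ μ Set.univ ≠ ⊤ ∧
      ∀ (g : G) (s : Set (G ⧸ Γ)), μ ((g • ·) ⁻¹' s) = μ s

/-!
The implication from closed orbits to minimal sets is formal: a compact minimal set is the closure
of the orbit of any of its points. For the converse, let `F` be the compact closure of `A x`. By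
Zorn's lemma `F` contains a compact minimal set, which by hypothesis is a compact orbit `A y`. The
point is that compact orbits are isolated when `n ≥ 3` (`mem_orbit_of_compact_orbit_subset`):
`A y ⊆ F` forces `x ∈ A y`, so that `A x = A y` is closed. Suppose that `x ∉ A y`.

* Since `A y` is compact, the stabiliser of `y` is cocompact in `A` (`exists_stabilizer_near`).
* There are points `h • y ∈ F` with `h` arbitrarily close to `1` and not diagonal. Conjugating `h`
  by the stabiliser so that its largest off-diagonal entry becomes of size about `1` and passing to
  a limit gives `u • y ∈ F` with `u ≠ 1` in the root group of some `α_{ij}`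
  (`exists_elemU_smul_mem`).
* For `n ≥ 3` the root `α_{ij}` takes a dense set of values on the stabiliser
  (`dense_rootValues`). Indeed, the stabiliser comes within bounded distance of every element of
  `ker α_{ij}`, and discreteness of the values would produce elements of the stabiliser lying in
  `ker α_{ij}` and having a simple eigenvalue. This is impossible: such an element is conjugate to
  an integer matrix, and a repeated eigenvalue forces all eigenvalues to be repeated
  (`exists_entry_eq`).
* Conjugating `u` by the stabiliser and taking closures, `F` contains a half-line `u(s) • y`, where
  `s` has a fixed sign. For a suitable `s` this lattice has a nonzero vector on a coordinate
  hyperplane, and its `A`-orbit is then unbounded (`coord_ne_zero`), contradicting the compactness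
  of `F` (`elemU_smul_notMem`).
-/

/-! ### Topology of `SL_n(ℝ)` and of `SL_n(ℝ)/SL_n(ℤ)` -/

instance instIsTopologicalGroupSLR (n : ℕ) : IsTopologicalGroup (SLR n) :=
  Matrix.SpecialLinearGroup.topologicalGroup

instance instT2SpaceSLR (n : ℕ) : T2Space (SLR n) :=
  inferInstanceAs (T2Space {A : Matrix (Fin n) (Fin n) ℝ // A.det = 1})

lemma continuous_entry (n : ℕ) (i j : Fin n) : Continuous fun g : SLR n => g.1 i j := by
  have h : Continuous fun g : SLR n => g.1 := continuous_subtype_val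
  exact h.matrix_elem i j

lemma isClosedEmbedding_val (n : ℕ) :
    Topology.IsClosedEmbedding (fun g : SLR n => (g.1 : Matrix (Fin n) (Fin n) ℝ)) := by
  have h : IsClosed {A : Matrix (Fin n) (Fin n) ℝ | A.det = 1} :=
    isClosed_eq (Continuous.matrix_det continuous_id) continuous_const
  exact h.isClosedEmbedding_subtypeVal

lemma mem_GammaZ_iff {n : ℕ} (g : SLR n) :
    g ∈ GammaZ n ↔ ∀ i j, g.1 i j ∈ Set.range ((↑) : ℤ → ℝ) := by
  constructor
  · rintro ⟨γ, rfl⟩ i j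
    exact ⟨γ.1 i j, by simp⟩
  · intro h
    choose m hm using h
    have hmap : (Matrix.of m).map (Int.castRingHom ℝ) = g.1 := by
      ext i j; simp [hm]
    have hdet : (Matrix.of m).det = 1 := by
      have h1 : (((Matrix.of m).det : ℤ) : ℝ) = 1 := by
        have := (Int.castRingHom ℝ).map_det (Matrix.of m)
        rw [RingHom.mapMatrix_apply, hmap, g.2] at this
        simpa using this
      exact_mod_cast h1
    refine ⟨⟨Matrix.of m, hdet⟩, ?_⟩
    exact Matrix.SpecialLinearGroup.ext _ _ fun i j => hm i j

/-- The image in `SL_n(ℝ)` of an element of `SL_n(ℤ)`. -/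
def ofInt {n : ℕ} (γ : Matrix.SpecialLinearGroup (Fin n) ℤ) : SLR n :=
  Matrix.SpecialLinearGroup.map (Int.castRingHom ℝ) γ

lemma ofInt_apply {n : ℕ} (γ : Matrix.SpecialLinearGroup (Fin n) ℤ) (i j : Fin n) :
    (ofInt γ).1 i j = (γ.1 i j : ℝ) := rfl

lemma ofInt_inv {n : ℕ} (γ : Matrix.SpecialLinearGroup (Fin n) ℤ) :
    (ofInt γ)⁻¹ = ofInt γ⁻¹ := (map_inv (Matrix.SpecialLinearGroup.map (Int.castRingHom ℝ)) γ).symm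

lemma isClosed_GammaZ (n : ℕ) : IsClosed (GammaZ n : Set (SLR n)) := by
  have h : (GammaZ n : Set (SLR n)) =
      ⋂ i, ⋂ j, (fun g : SLR n => g.1 i j) ⁻¹' Set.range ((↑) : ℤ → ℝ) := by
    ext g
    simp only [Set.mem_iInter, Set.mem_preimage]
    exact mem_GammaZ_iff g
  rw [h]
  exact isClosed_iInter fun i => isClosed_iInter fun j =>
    Int.isClosedEmbedding_coe_real.isClosed_range.preimage (continuous_entry n i j)

instance instT2SpaceQuot (n : ℕ) : T2Space (SLR n ⧸ GammaZ n) := by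
  rw [t2Space_iff_of_isOpenQuotientMap (QuotientGroup.isOpenQuotientMap_mk (N := GammaZ n))]
  have : {q : SLR n × SLR n | (q.1 : SLR n ⧸ GammaZ n) = q.2} =
      (fun q : SLR n × SLR n => q.1⁻¹ * q.2) ⁻¹' (GammaZ n : Set (SLR n)) := by
    ext q
    exact QuotientGroup.eq
  rw [this]
  exact (isClosed_GammaZ n).preimage (by fun_prop)

/-- The subgroup of `SL_n(ℝ)` with underlying set `posDiag n`. -/
def diagGroup (n : ℕ) : Subgroup (SLR n) where
  carrier := posDiag n
  one_mem' := by
    refine ⟨fun i j h => by simp [h], fun i => by simp⟩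
  mul_mem' := by
    rintro a b ⟨ha, ha'⟩ ⟨hb, hb'⟩
    have key : ∀ i j, (a * b).1 i j = a.1 i i * b.1 i j := by
      intro i j
      rw [Matrix.SpecialLinearGroup.coe_mul, Matrix.mul_apply]
      exact Finset.sum_eq_single i (fun k _ hk => by rw [ha i k hk.symm, zero_mul]) (by simp)
    refine ⟨fun i j h => by rw [key, hb i j h, mul_zero], fun i => ?_⟩
    rw [key]
    exact mul_pos (ha' i) (hb' i)
  inv_mem' := by
    rintro a ⟨ha, ha'⟩
    have key : ∀ i j, a.1 i i * (a⁻¹).1 i j = (1 : Matrix (Fin n) (Fin n) ℝ) i j := by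
      intro i j
      have : (a * a⁻¹).1 i j = (1 : Matrix (Fin n) (Fin n) ℝ) i j := by simp
      rw [← this, Matrix.SpecialLinearGroup.coe_mul, Matrix.mul_apply]
      refine (Finset.sum_eq_single (f := fun k => a.1 i k * (a⁻¹).1 k j) i
        (fun k _ hk => ?_) (by simp)).symm
      simp only [ha i k hk.symm, zero_mul]
    refine ⟨fun i j h => ?_, fun i => ?_⟩
    · have := key i j
      rw [Matrix.one_apply_ne h] at this
      exact (mul_eq_zero.1 this).resolve_left (ha' i).ne'
    · have := key i i
      rw [Matrix.one_apply_eq] at this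
      exact pos_of_mul_pos_right (by rw [this]; exact one_pos) (ha' i).le

lemma mem_diagGroup {n : ℕ} {a : SLR n} : a ∈ diagGroup n ↔ a ∈ posDiag n := Iff.rfl

lemma diag_mul_apply {n : ℕ} {a : SLR n} (ha : a ∈ diagGroup n) (b : SLR n) (i j : Fin n) :
    (a * b).1 i j = a.1 i i * b.1 i j := by
  rw [Matrix.SpecialLinearGroup.coe_mul, Matrix.mul_apply]
  exact Finset.sum_eq_single i (fun k _ hk => by rw [ha.1 i k hk.symm, zero_mul]) (by simp)

lemma mul_diag_apply {n : ℕ} {a : SLR n} (ha : a ∈ diagGroup n) (b : SLR n) (i j : Fin n) :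
    (b * a).1 i j = b.1 i j * a.1 j j := by
  rw [Matrix.SpecialLinearGroup.coe_mul, Matrix.mul_apply]
  exact Finset.sum_eq_single j (fun k _ hk => by rw [ha.1 k j hk, mul_zero]) (by simp)

lemma inv_diag_apply {n : ℕ} {a : SLR n} (ha : a ∈ diagGroup n) (i : Fin n) :
    (a⁻¹).1 i i = (a.1 i i)⁻¹ := by
  have h := diag_mul_apply ha a⁻¹ i i
  rw [mul_inv_cancel] at h
  exact eq_inv_of_mul_eq_one_right (h.symm.trans (by simp))

/-- The diagonal matrix with positive diagonal `d` of product `1`. -/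
def diagOf {n : ℕ} (d : Fin n → ℝ) (h : ∏ i, d i = 1) : SLR n :=
  ⟨Matrix.diagonal d, by rw [Matrix.det_diagonal, h]⟩

lemma diagOf_mem {n : ℕ} (d : Fin n → ℝ) (h : ∏ i, d i = 1) (hd : ∀ i, 0 < d i) :
    diagOf d h ∈ diagGroup n :=
  ⟨fun _ _ hij => Matrix.diagonal_apply_ne _ hij, fun i => by simpa [diagOf] using hd i⟩

lemma diagOf_apply {n : ℕ} (d : Fin n → ℝ) (h : ∏ i, d i = 1) (i : Fin n) :
    (diagOf d h).1 i i = d i := by simp [diagOf]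

/-- Diagonal with entry `t ^ (n - 1)` at the index `i` and `t⁻¹` elsewhere. -/
noncomputable def spike {n : ℕ} (t : ℝ) (i : Fin n) : Fin n → ℝ :=
  fun k => t⁻¹ * if k = i then t ^ n else 1

lemma spike_prod {n : ℕ} {t : ℝ} (ht : 0 < t) (i : Fin n) : ∏ k, spike t i k = 1 := by
  simp only [spike, Finset.prod_mul_distrib, Finset.prod_ite_eq', Finset.mem_univ, if_true,
    Finset.prod_const, Finset.card_univ, Fintype.card_fin]
  rw [inv_pow, inv_mul_cancel₀ (pow_pos ht n).ne']

lemma spike_pos {n : ℕ} {t : ℝ} (ht : 0 < t) (i k : Fin n) : 0 < spike t i k := by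
  unfold spike; split_ifs <;> positivity

/-! ### Compact sets and short vectors -/

/-- A compact subset of the quotient lifts to a set of matrices with bounded inverses. -/
lemma exists_bounded_lift {n : ℕ} {F : Set (SLR n ⧸ GammaZ n)} (hF : IsCompact F) :
    ∃ R : ℝ, ∀ h : SLR n, (h : SLR n ⧸ GammaZ n) ∈ F →
      ∃ γ ∈ GammaZ n, ∀ i j, |((h * γ)⁻¹).1 i j| < R := by
  let U : ℕ → Set (SLR n) := fun R => {h | ∀ i j, |(h⁻¹).1 i j| < R}
  have hU : ∀ R, IsOpen (U R) := by
    intro R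
    have : U R = ⋂ i, ⋂ j, {h : SLR n | |(h⁻¹).1 i j| < (R : ℝ)} := by
      ext; simp only [U, Set.mem_ofPred_eq, Set.mem_iInter]
    rw [this]
    refine isOpen_iInter_of_finite fun i => isOpen_iInter_of_finite fun j => ?_
    exact isOpen_lt ((continuous_entry n i j).comp continuous_inv).abs continuous_const
  have hmono : Monotone U := fun a b hab h hh i j =>
    (hh i j).trans_le (by exact_mod_cast hab)
  obtain ⟨R, hR⟩ := hF.elim_directed_cover
    (fun R => ((↑) : SLR n → SLR n ⧸ GammaZ n) '' U R)
    (fun R => QuotientGroup.isOpenQuotientMap_mk.isOpenMap _ (hU R))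
    (by
      intro z _
      obtain ⟨h, rfl⟩ := QuotientGroup.mk_surjective z
      obtain ⟨R, hR⟩ := exists_nat_gt (∑ i, ∑ j, |(h⁻¹).1 i j|)
      refine Set.mem_iUnion.2 ⟨R, h, fun i j => lt_of_le_of_lt ?_ hR, rfl⟩
      calc |(h⁻¹).1 i j| ≤ ∑ j, |(h⁻¹).1 i j| :=
            Finset.single_le_sum (f := fun j => |(h⁻¹).1 i j|) (fun _ _ => abs_nonneg _)
              (Finset.mem_univ j)
        _ ≤ _ := Finset.single_le_sum (f := fun i => ∑ j, |(h⁻¹).1 i j|)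
              (fun _ _ => Finset.sum_nonneg fun _ _ => abs_nonneg _) (Finset.mem_univ i))
    (Monotone.directed_le fun a b hab => Set.image_mono (hmono hab))
  refine ⟨R, fun h hh => ?_⟩
  obtain ⟨h', hh', heq⟩ := hR hh
  refine ⟨h⁻¹ * h', QuotientGroup.eq.1 heq.symm, fun i j => ?_⟩
  rw [mul_inv_cancel_left]
  exact hh' i j

/-- If the diagonal orbit of the lattice `g ℤⁿ` stays in a compact set, then no nonzero vector of
the lattice lies on a coordinate hyperplane: otherwise diagonal elements would contract it to `0`. -/
lemma coord_ne_zero {n : ℕ} {F : Set (SLR n ⧸ GammaZ n)} (hF : IsCompact F)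
    (hinv : ∀ a ∈ diagGroup n, ∀ z ∈ F, a • z ∈ F) {g : SLR n}
    (hg : (g : SLR n ⧸ GammaZ n) ∈ F) {v : Fin n → ℤ} (hv : v ≠ 0) (i : Fin n) :
    (g.1 *ᵥ fun k => (v k : ℝ)) i ≠ 0 := by
  intro h0
  obtain ⟨R, hR⟩ := exists_bounded_lift hF
  set w := g.1 *ᵥ fun k => (v k : ℝ) with hw
  obtain ⟨t, ht⟩ := exists_gt (max 1 (R * ∑ j, |w j|))
  have ht1 : 1 < t := (le_max_left _ _).trans_lt ht
  have ht2 : R * ∑ j, |w j| < t := (le_max_right _ _).trans_lt ht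
  have htpos : 0 < t := one_pos.trans ht1
  set a := diagOf (spike t i) (spike_prod htpos i)
  have ha : a ∈ diagGroup n := diagOf_mem _ _ (spike_pos htpos i)
  have hmem : ((a * g : SLR n) : SLR n ⧸ GammaZ n) ∈ F := hinv a ha _ hg
  obtain ⟨γ, ⟨γ', rfl⟩, hb⟩ := hR _ hmem
  set γ : SLR n := ofInt γ' with hγ
  change ∀ i j, |((a * g * γ)⁻¹).1 i j| < R at hb
  set v' : Fin n → ℤ := (γ'⁻¹).1 *ᵥ v with hv'
  have hcast : (fun k => (v' k : ℝ)) = (γ⁻¹).1 *ᵥ fun k => (v k : ℝ) := by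
    ext k
    simp only [hv', hγ, Matrix.mulVec, dotProduct, ofInt_inv, ofInt_apply]
    push_cast
    rfl
  have hvv : (fun k => (v' k : ℝ)) = ((a * g * γ)⁻¹).1 *ᵥ (t⁻¹ • w) := by
    have haw : t⁻¹ • w = a.1 *ᵥ w := by
      ext k
      have : (a.1 *ᵥ w) k = spike t i k * w k := by
        simp [a, diagOf, Matrix.mulVec_diagonal]
      rw [this]
      by_cases hk : k = i
      · subst hk; simp [h0]
      · simp [spike, hk]
    rw [haw, hw, Matrix.mulVec_mulVec, Matrix.mulVec_mulVec, hcast, 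
      ← Matrix.SpecialLinearGroup.coe_mul, ← Matrix.SpecialLinearGroup.coe_mul]
    have : γ⁻¹ = (a * g * γ)⁻¹ * (a * g) := by group
    rw [this, mul_assoc ((a * g * γ)⁻¹)]
  have hzero : v' = 0 := by
    ext k
    have h1 : |(v' k : ℝ)| < 1 := by
      have := congrFun hvv k
      rw [this]
      calc |(((a * g * γ)⁻¹).1 *ᵥ (t⁻¹ • w)) k|
          ≤ ∑ j, |((a * g * γ)⁻¹).1 k j * (t⁻¹ • w) j| :=
            Finset.abs_sum_le_sum_abs (fun j => ((a * g * γ)⁻¹).1 k j * (t⁻¹ • w) j) Finset.univ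
        _ ≤ ∑ j, R * (t⁻¹ * |w j|) := by
            refine Finset.sum_le_sum fun j _ => ?_
            rw [abs_mul, Pi.smul_apply, smul_eq_mul, abs_mul, abs_of_pos (inv_pos.2 htpos)]
            exact mul_le_mul_of_nonneg_right (hb k j).le (by positivity)
        _ = (R * ∑ j, |w j|) / t := by
            rw [Finset.mul_sum, Finset.sum_div]
            exact Finset.sum_congr rfl fun j _ => by ring
        _ < 1 := by rwa [div_lt_one htpos]
    have h2 : |v' k| < 1 := by exact_mod_cast h1
    simpa using Int.abs_lt_one_iff.1 h2
  apply hv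
  have : v = γ'.1 *ᵥ v' := by
    rw [hv', Matrix.mulVec_mulVec, ← Matrix.SpecialLinearGroup.coe_mul]
    simp
  rw [this, hzero, Matrix.mulVec_zero]

/-! ### Stabilisers of points with compact diagonal orbit -/

/-- The diagonal matrices of determinant one with entries in `[m⁻¹, m]`. -/
def diagBox (n : ℕ) (m : ℝ) : Set (SLR n) :=
  {g | ∀ i j, g.1 i j ∈ if i = j then Set.Icc m⁻¹ m else {0}}

lemma isCompact_diagBox (n : ℕ) (m : ℝ) : IsCompact (diagBox n m) := by
  have h : IsCompact (Set.pi Set.univ fun i : Fin n => Set.pi Set.univ fun j : Fin n =>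
      if i = j then Set.Icc m⁻¹ m else ({0} : Set ℝ)) := by
    refine isCompact_univ_pi fun i => isCompact_univ_pi fun j => ?_
    split_ifs
    · exact isCompact_Icc
    · exact isCompact_singleton
  have h2 := (isClosedEmbedding_val n).isCompact_preimage h
  convert h2 using 1
  ext g
  exact ⟨fun h i _ j _ => h i j, fun h i j => h i trivial j trivial⟩

lemma diagBox_subset {n : ℕ} {m : ℝ} (hm : 0 < m) : diagBox n m ⊆ posDiag n := by
  intro g hg
  refine ⟨fun i j hij => by simpa [hij] using hg i j, fun i => ?_⟩
  have := hg i i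
  simp only [if_true] at this
  exact (inv_pos.2 hm).trans_le this.1

lemma mem_diagBox {n : ℕ} {m : ℝ} {g : SLR n} (hg : g ∈ posDiag n)
    (h : ∀ i, m⁻¹ ≤ g.1 i i ∧ g.1 i i ≤ m) : g ∈ diagBox n m := by
  intro i j
  split_ifs with hij
  · subst hij; exact h i
  · exact hg.1 i j hij

lemma exists_mem_diagBox {n : ℕ} {g : SLR n} (hg : g ∈ posDiag n) :
    ∃ m : ℕ, g ∈ diagBox n (m + 1 : ℝ) := by
  obtain ⟨m, hm⟩ := exists_nat_gt (∑ i, (g.1 i i + (g.1 i i)⁻¹))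
  refine ⟨m, mem_diagBox hg fun i => ?_⟩
  have hp := hg.2 i
  have h1 : g.1 i i + (g.1 i i)⁻¹ ≤ ∑ i, (g.1 i i + (g.1 i i)⁻¹) :=
    Finset.single_le_sum (f := fun i => g.1 i i + (g.1 i i)⁻¹)
      (fun i _ => by have := hg.2 i; positivity) (Finset.mem_univ i)
  have h2 := inv_pos.2 hp
  exact ⟨inv_le_of_inv_le₀ hp (by linarith), by linarith⟩

/-- The stabiliser of a point with compact diagonal orbit is cocompact in the diagonal group.
By Baire's theorem the image of some box has nonempty interior in the orbit, so finitely many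
translates of this image cover the orbit. -/
lemma exists_stabilizer_near {n : ℕ} {y : SLR n ⧸ GammaZ n}
    (hc : IsCompact ((· • y) '' posDiag n)) :
    ∃ C : ℝ, 1 ≤ C ∧ ∀ a ∈ diagGroup n, ∃ δ ∈ diagGroup n, δ • y = y ∧
      ∀ k, δ.1 k k ≤ C * a.1 k k ∧ a.1 k k ≤ C * δ.1 k k := by
  have hcont : Continuous fun g : SLR n => g • y := by fun_prop
  set T := (· • y) '' posDiag n with hT
  have : CompactSpace T := isCompact_iff_compactSpace.1 hc
  have hyT : y ∈ T := ⟨1, (diagGroup n).one_mem, one_smul _ _⟩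
  have : Nonempty T := ⟨⟨y, hyT⟩⟩
  obtain ⟨m, ⟨z, hz⟩⟩ := nonempty_interior_of_iUnion_of_closed
    (f := fun m : ℕ => ((↑) : T → SLR n ⧸ GammaZ n) ⁻¹' ((· • y) '' diagBox n (m + 1 : ℝ)))
    (fun m => (((isCompact_diagBox n _).image hcont).isClosed).preimage continuous_subtype_val)
    (by
      refine Set.eq_univ_of_forall fun ⟨z, a, ha, hz⟩ => ?_
      obtain ⟨m, hm⟩ := exists_mem_diagBox ha
      exact Set.mem_iUnion.2 ⟨m, a, hm, hz⟩)
  obtain ⟨V, hVsub, hVo, hzV⟩ := mem_interior.1 hz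
  obtain ⟨W, hWo, rfl⟩ := isOpen_induced_iff.1 hVo
  obtain ⟨⟨_, c, hcA, rfl⟩, hz2⟩ : ∃ z' : T, z' ∈ ((↑) : T → SLR n ⧸ GammaZ n) ⁻¹' W := ⟨z, hzV⟩
  have hcW : c • y ∈ W := hz2
  obtain ⟨t, ht⟩ := hc.elim_finite_subcover (fun b : diagGroup n => (b.1 • ·) ⁻¹' W)
    (fun b => hWo.preimage (continuous_const_smul _)) (by
      rintro _ ⟨b, hb, rfl⟩
      refine Set.mem_iUnion.2 ⟨⟨c, hcA⟩ * ⟨b, hb⟩⁻¹, ?_⟩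
      simpa [smul_smul] using hcW)
  have hpos : (0 : ℝ) < m + 1 := by positivity
  set D : ℝ := ∑ b ∈ t, ∑ k, (b.1.1 k k + (b.1.1 k k)⁻¹) with hD
  have hDb : ∀ b ∈ t, ∀ k, b.1.1 k k ≤ D ∧ (b.1.1 k k)⁻¹ ≤ D := by
    intro b hb k
    have hn : ∀ (b : diagGroup n) (k : Fin n), 0 < b.1.1 k k + (b.1.1 k k)⁻¹ := fun b k => by
      have := b.2.2 k; positivity
    have h1 : ∑ k, (b.1.1 k k + (b.1.1 k k)⁻¹) ≤ D := Finset.single_le_sum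
      (f := fun b : diagGroup n => ∑ k, (b.1.1 k k + (b.1.1 k k)⁻¹))
      (fun b _ => Finset.sum_nonneg fun k _ => (hn b k).le) hb
    have h2 : b.1.1 k k + (b.1.1 k k)⁻¹ ≤ ∑ k, (b.1.1 k k + (b.1.1 k k)⁻¹) :=
      Finset.single_le_sum (f := fun k => b.1.1 k k + (b.1.1 k k)⁻¹)
      (fun k _ => (hn b k).le) (Finset.mem_univ k)
    have h3 := b.2.2 k
    have h4 := inv_pos.2 h3
    constructor <;> linarith
  have hD0 : 0 ≤ D := Finset.sum_nonneg fun b _ => Finset.sum_nonneg fun k _ => by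
    have := b.2.2 k; positivity
  refine ⟨1 + (m + 1) * D, by nlinarith [mul_nonneg hpos.le hD0], fun a ha => ?_⟩
  obtain ⟨b, hbt, hbW⟩ : ∃ b ∈ t, b.1 • a • y ∈ W := by
    simpa using ht (Set.mem_image_of_mem (· • y) ha)
  have hbaT : b.1 • a • y ∈ T := ⟨b.1 * a, mul_mem b.2 ha, mul_smul _ _ _⟩
  obtain ⟨e, he, hey⟩ : b.1 • a • y ∈ (· • y) '' diagBox n (m + 1 : ℝ) :=
    hVsub (show (⟨_, hbaT⟩ : T) ∈ ((↑) : T → SLR n ⧸ GammaZ n) ⁻¹' W from hbW)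
  have heA : e ∈ diagGroup n := diagBox_subset hpos he
  refine ⟨e⁻¹ * (b.1 * a), mul_mem (inv_mem heA) (mul_mem b.2 ha), ?_, fun k => ?_⟩
  · rw [mul_smul, mul_smul, ← hey]
    exact inv_smul_smul e y
  · rw [diag_mul_apply (inv_mem heA), diag_mul_apply b.2, inv_diag_apply heA]
    have h1 := he k k
    simp only [if_true] at h1
    have hek := heA.2 k
    have hak := ha.2 k
    have hbk := b.2.2 k
    obtain ⟨hb1, hb2⟩ := hDb b hbt k
    have h2 : (e.1 k k)⁻¹ ≤ m + 1 := inv_le_of_inv_le₀ hpos h1.1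
    have h3 : (e.1 k k)⁻¹ * b.1.1 k k ≤ (m + 1) * D :=
      mul_le_mul h2 hb1 hbk.le hpos.le
    have h4 : e.1 k k * (b.1.1 k k)⁻¹ ≤ (m + 1) * D :=
      mul_le_mul h1.2 hb2 (inv_pos.2 hbk).le hpos.le
    constructor
    · rw [← mul_assoc]
      exact mul_le_mul_of_nonneg_right (by linarith) hak.le
    · have h5 : a.1 k k = (e.1 k k * (b.1.1 k k)⁻¹) * ((e.1 k k)⁻¹ * (b.1.1 k k * a.1 k k)) := by
        field_simp
      have hp : 0 < (e.1 k k)⁻¹ * (b.1.1 k k * a.1 k k) := by positivity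
      calc a.1 k k = _ := h5
        _ ≤ _ := mul_le_mul_of_nonneg_right (by linarith) hp.le

/-! ### Arithmetic of the stabiliser -/

open Polynomial in
lemma eval_derivative_prod_X_sub {n : ℕ} (d : Fin n → ℝ) (k : Fin n) :
    (derivative (∏ i, (X - C (d i)))).eval (d k) = ∏ j ∈ Finset.univ.erase k, (d k - d j) := by
  rw [derivative_prod_finset, eval_finsetSum, Finset.sum_eq_single k]
  · simp [eval_prod]
  · intro i _ hik
    rw [eval_mul, eval_prod, Finset.prod_eq_zero (i := k)]
    · simp
    · simp [hik.symm]
    · simp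
  · simp

open Polynomial in
/-- An element of the stabiliser with one repeated diagonal entry has all of its entries repeated.
It is conjugate to an integer matrix `γ`; if `p` is the derivative of its characteristic polynomial,
then the lattice vectors in the image of `p(γ)` have a vanishing coordinate, so `p(γ) = 0`. -/
lemma exists_entry_eq {n : ℕ} {g : SLR n}
    (hcoord : ∀ v : Fin n → ℤ, v ≠ 0 → ∀ i, (g.1 *ᵥ fun k => (v k : ℝ)) i ≠ 0)
    {δ : SLR n} (hδ : δ ∈ diagGroup n) (hstab : δ • (g : SLR n ⧸ GammaZ n) = g)
    {i j : Fin n} (hij : i ≠ j) (heq : δ.1 i i = δ.1 j j) (k : Fin n) :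
    ∃ l, l ≠ k ∧ δ.1 l l = δ.1 k k := by
  obtain ⟨γ, hγ'⟩ : g⁻¹ * (δ * g) ∈ GammaZ n := QuotientGroup.eq.1 hstab.symm
  have hγ : ofInt γ = g⁻¹ * (δ * g) := hγ'
  have hgγ : g * ofInt γ = δ * g := by rw [hγ, mul_inv_cancel_left]
  set d : Fin n → ℝ := fun k => δ.1 k k with hd
  have hdiag : δ.1 = Matrix.diagonal d := by
    ext r c
    by_cases h : r = c
    · subst h; simp [hd]
    · rw [hδ.1 r c h, Matrix.diagonal_apply_ne _ h]
  have hchar : γ.1.charpoly.map (Int.castRingHom ℝ) = ∏ l, (X - C (d l)) := by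
    rw [← Matrix.charpoly_map, ← Matrix.charpoly_diagonal, ← hdiag]
    change (ofInt γ).1.charpoly = _
    rw [hγ, Matrix.SpecialLinearGroup.coe_mul, Matrix.charpoly_mul_comm,
      ← Matrix.SpecialLinearGroup.coe_mul, mul_inv_cancel_right]
  have hpow : ∀ (m : ℕ) (r c : Fin n), (g.1 * (ofInt γ).1 ^ m) r c = d r ^ m * g.1 r c := by
    intro m
    induction m with
    | zero => intro r c; simp
    | succ m ih =>
      intro r c
      rw [pow_succ', ← mul_assoc, ← Matrix.SpecialLinearGroup.coe_mul, hgγ,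
        Matrix.SpecialLinearGroup.coe_mul, mul_assoc, hdiag, Matrix.diagonal_mul, ih]
      ring
  have hpoly : ∀ (q : ℝ[X]) (r c : Fin n),
      (g.1 * aeval (ofInt γ).1 q) r c = q.eval (d r) * g.1 r c := by
    intro q r c
    induction q using Polynomial.induction_on' with
    | add p q hp hq => rw [map_add, mul_add, Matrix.add_apply, hp, hq, eval_add, add_mul]
    | monomial m x =>
      rw [aeval_monomial, eval_monomial, Algebra.algebraMap_eq_smul_one, smul_mul_assoc, one_mul,
        Matrix.mul_smul, Matrix.smul_apply, hpow, smul_eq_mul, mul_assoc]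
  set p : ℤ[X] := derivative γ.1.charpoly
  have hp : p.map (Int.castRingHom ℝ) = derivative (∏ l, (X - C (d l))) := by
    rw [← hchar, derivative_map]
  set Q : Matrix (Fin n) (Fin n) ℤ := aeval γ.1 p
  have hQ : ∀ r c, (aeval (ofInt γ).1 (p.map (Int.castRingHom ℝ))) r c = (Q r c : ℝ) := by
    intro r c
    have h := Polynomial.map_aeval_eq_aeval_map (S := Matrix (Fin n) (Fin n) ℤ)
      (U := Matrix (Fin n) (Fin n) ℝ) (φ := Int.castRingHom ℝ)
      (ψ := (Int.castRingHom ℝ).mapMatrix) (by ext; simp) p γ.1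
    exact (congrFun (congrFun h r) c).symm
  have hroot : ∀ l, (∃ l', l' ≠ l ∧ d l' = d l) ↔
      (p.map (Int.castRingHom ℝ)).eval (d l) = 0 := by
    intro l
    rw [hp, eval_derivative_prod_X_sub, Finset.prod_eq_zero_iff]
    constructor
    · rintro ⟨l', h1, h2⟩
      exact ⟨l', by simp [h1], by rw [h2, sub_self]⟩
    · rintro ⟨l', h1, h2⟩
      exact ⟨l', by simpa using h1, (sub_eq_zero.1 h2).symm⟩
  have hQ0 : ∀ r c, Q r c = 0 := by
    intro r c
    by_contra hne
    refine hcoord (fun r => Q r c) (fun h => hne (congrFun h r)) i ?_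
    have h := hpoly (p.map (Int.castRingHom ℝ)) i c
    rw [(hroot i).1 ⟨j, hij.symm, heq.symm⟩, zero_mul] at h
    rw [← h, Matrix.mul_apply]
    simp only [hQ]
    rfl
  rw [hroot k]
  have hg : g.1 k k ≠ 0 := by
    have h := hcoord (Pi.single k 1) (by simp) k
    contrapose! h
    rw [Matrix.mulVec, dotProduct, Finset.sum_eq_single k]
    · simp [h]
    · intro b _ hb; simp [hb]
    · simp
  have h := hpoly (p.map (Int.castRingHom ℝ)) k k
  rw [Matrix.mul_apply, Finset.sum_eq_zero fun r _ => by rw [hQ, hQ0]; simp] at h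
  exact (mul_eq_zero.1 h.symm).resolve_right hg

/-! ### Density of the values of a root on the stabiliser -/

/-- The subgroup of the reals formed by the values of `log (δ_jj / δ_ii)`, where `δ` runs over the
diagonal stabiliser of `y`. -/
noncomputable def rootValues {n : ℕ} (y : SLR n ⧸ GammaZ n) (i j : Fin n) : AddSubgroup ℝ where
  carrier := {t | ∃ δ ∈ diagGroup n, δ • y = y ∧ Real.log (δ.1 j j) - Real.log (δ.1 i i) = t}
  zero_mem' := ⟨1, one_mem _, one_smul _ _, by simp⟩
  add_mem' := by
    rintro _ _ ⟨a, ha, hay, rfl⟩ ⟨b, hb, hby, rfl⟩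
    refine ⟨a * b, mul_mem ha hb, by rw [mul_smul, hby, hay], ?_⟩
    rw [diag_mul_apply ha, diag_mul_apply ha, Real.log_mul (ha.2 j).ne' (hb.2 j).ne',
      Real.log_mul (ha.2 i).ne' (hb.2 i).ne']
    ring
  neg_mem' := by
    rintro _ ⟨a, ha, hay, rfl⟩
    refine ⟨a⁻¹, inv_mem ha, by rw [inv_smul_eq_iff, hay], ?_⟩
    rw [inv_diag_apply ha, inv_diag_apply ha, Real.log_inv, Real.log_inv]
    ring

lemma abs_log_sub_le {C a x y : ℝ} (hC : 1 ≤ C) (ha : 0 < a) (hx : 0 < x) (hy : 0 < y)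
    (hx1 : x ≤ C * a) (hx2 : a ≤ C * x) (hy1 : y ≤ C * a) (hy2 : a ≤ C * y) :
    |Real.log y - Real.log x| ≤ 2 * Real.log C := by
  have hC0 : 0 < C := by linarith
  have key : ∀ {u v : ℝ}, 0 < u → 0 < v → u ≤ C * v → Real.log u ≤ Real.log C + Real.log v :=
    fun hu hv h => by
      rw [← Real.log_mul hC0.ne' hv.ne']
      exact Real.log_le_log hu h
  have h1 := key hx ha hx1
  have h2 := key ha hx hx2
  have h3 := key hy ha hy1
  have h4 := key ha hy hy2
  rw [abs_le]
  constructor <;> linarith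

/-- For `n ≥ 3` every root takes a dense set of values on the stabiliser. Approximating diagonal
elements of `ker α` with one eigenvalue very different from the others, one finds stabiliser
elements with distinct but arbitrarily close values of `α`: equal values would give an element of
the stabiliser with both a repeated and a simple diagonal entry. -/
lemma dense_rootValues {n : ℕ} (hn : 3 ≤ n) {g : SLR n}
    (hcoord : ∀ v : Fin n → ℤ, v ≠ 0 → ∀ i, (g.1 *ᵥ fun k => (v k : ℝ)) i ≠ 0)
    {C : ℝ} (hC : 1 ≤ C)
    (hnear : ∀ a ∈ diagGroup n, ∃ δ ∈ diagGroup n, δ • (g : SLR n ⧸ GammaZ n) = g ∧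
      ∀ k, δ.1 k k ≤ C * a.1 k k ∧ a.1 k k ≤ C * δ.1 k k)
    {i j : Fin n} (hij : i ≠ j) :
    Dense (rootValues (g : SLR n ⧸ GammaZ n) i j : Set ℝ) := by
  apply AddSubgroup.dense_of_not_isolated_zero
  intro ε hε
  obtain ⟨k, hki, hkj⟩ : ∃ k : Fin n, k ≠ i ∧ k ≠ j := by
    by_contra! h
    have h1 : (Finset.univ : Finset (Fin n)) ⊆ {i, j} := fun k _ => by
      by_cases hk : k = i
      · simp [hk]
      · simp [h k hk]
    have := (Finset.card_le_card h1).trans Finset.card_le_two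
    simp at this
    omega
  set b : ℝ := 1 / (C ^ 2 + 1) with hb
  have hb0 : 0 < b := by positivity
  have hb1 : b < 1 := by
    rw [hb, div_lt_one (by positivity)]; nlinarith
  have hCb : C ^ 2 * b < 1 := by
    rw [hb, mul_one_div, div_lt_one (by positivity)]; linarith
  have hbm : ∀ m : ℕ, 0 < b ^ m := fun m => pow_pos hb0 m
  choose δ hδA hδy hδ using fun m : ℕ =>
    hnear (diagOf (spike (b ^ m) k) (spike_prod (hbm m) k)) (diagOf_mem _ _ (spike_pos (hbm m) k))
  simp only [diagOf_apply] at hδ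
  set x : ℕ → ℝ := fun m => Real.log ((δ m).1 j j) - Real.log ((δ m).1 i i) with hx
  have hxb : ∀ m, |x m| ≤ 2 * Real.log C := by
    intro m
    have hi := hδ m i
    have hj := hδ m j
    have e : spike (b ^ m) k i = spike (b ^ m) k j := by simp [spike, hki.symm, hkj.symm]
    rw [← e] at hj
    exact abs_log_sub_le hC (spike_pos (hbm m) k i) ((hδA m).2 i) ((hδA m).2 j)
      hi.1 hi.2 hj.1 hj.2
  obtain ⟨m₁, m₂, hlt, hfl⟩ : ∃ m₁ m₂, m₁ < m₂ ∧ ⌊x m₁ / ε⌋ = ⌊x m₂ / ε⌋ := by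
    have hmaps : Set.MapsTo (fun m => ⌊x m / ε⌋) Set.univ
        (Set.Icc ⌊-(2 * Real.log C) / ε⌋ ⌊2 * Real.log C / ε⌋) := by
      intro m _
      obtain ⟨h1, h2⟩ := abs_le.1 (hxb m)
      exact ⟨Int.floor_mono (by gcongr), Int.floor_mono (by gcongr)⟩
    obtain ⟨p, _, q, _, hpq, h⟩ :=
      Set.infinite_univ.exists_ne_map_eq_of_mapsTo hmaps (Set.finite_Icc _ _)
    rcases lt_or_gt_of_ne hpq with h' | h'
    · exact ⟨p, q, h', h⟩
    · exact ⟨q, p, h', h.symm⟩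
  set η := δ m₂ * (δ m₁)⁻¹ with hη
  have hηA : η ∈ diagGroup n := mul_mem (hδA m₂) (inv_mem (hδA m₁))
  have hηy : η • (g : SLR n ⧸ GammaZ n) = g := by
    have : (δ m₁)⁻¹ • (g : SLR n ⧸ GammaZ n) = g := by rw [inv_smul_eq_iff, hδy]
    rw [hη, mul_smul, this, hδy]
  have hηe : ∀ l, η.1 l l = (δ m₂).1 l l / (δ m₁).1 l l := fun l => by
    rw [hη, diag_mul_apply (hδA m₂), inv_diag_apply (hδA m₁), div_eq_mul_inv]
  -- `b ^ m₂ = u * b ^ m₁` with `C ^ 2 * u < 1`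
  set t := b ^ m₁ with ht
  set u := b ^ (m₂ - m₁) with hu
  have hut : b ^ m₂ = u * t := by rw [hu, ht, ← pow_add]; congr 1; omega
  have ht0 : 0 < t := hbm _
  have hu0 : 0 < u := hbm _
  have hub : u ≤ b := by
    simpa using pow_le_pow_of_le_one hb0.le hb1.le (show 1 ≤ m₂ - m₁ by omega)
  have hu1 : u ≤ 1 := hub.trans hb1.le
  have hCu : C ^ 2 * u < 1 := lt_of_le_of_lt (by gcongr) hCb
  have hC0 : 0 < C := by linarith
  have hηk : η.1 k k < 1 := by
    have h1 := (hδ m₁ k).2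
    have h2 := (hδ m₂ k).1
    have h3 := (hδA m₁).2 k
    rw [hηe, div_lt_one h3]
    obtain ⟨n', rfl⟩ : ∃ n', n = n' + 1 := ⟨n - 1, by omega⟩
    have hs : ∀ s : ℝ, 0 < s → spike s k k = s ^ n' := fun s hs => by
      simp only [spike, if_true]; field_simp; ring
    rw [hs _ (hbm _)] at h1 h2
    rw [hut, mul_pow] at h2
    have hun : u ^ n' ≤ u := by
      simpa using pow_le_pow_of_le_one hu0.le hu1 (show 1 ≤ n' by omega)
    calc (δ m₂).1 k k ≤ C * (u ^ n' * t ^ n') := h2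
      _ ≤ C * (u * (C * (δ m₁).1 k k)) := by gcongr
      _ = (C ^ 2 * u) * (δ m₁).1 k k := by ring
      _ < (δ m₁).1 k k := by nlinarith
  have hηl : ∀ l, l ≠ k → 1 < η.1 l l := by
    intro l hl
    have h1 := (hδ m₁ l).1
    have h2 := (hδ m₂ l).2
    have h3 := (hδA m₁).2 l
    have h4 := (hδA m₂).2 l
    rw [hηe, one_lt_div h3]
    simp only [spike, hl, if_false, mul_one] at h1 h2
    rw [hut] at h2
    have h5 : t⁻¹ = u * (u * t)⁻¹ := by field_simp
    calc (δ m₁).1 l l ≤ C * t⁻¹ := h1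
      _ = C * (u * (u * t)⁻¹) := by rw [← h5]
      _ ≤ C * (u * (C * (δ m₂).1 l l)) := by gcongr
      _ = (C ^ 2 * u) * (δ m₂).1 l l := by ring
      _ < (δ m₂).1 l l := by nlinarith
  have hmem : x m₂ - x m₁ ∈ rootValues (g : SLR n ⧸ GammaZ n) i j :=
    sub_mem ⟨δ m₂, hδA m₂, hδy m₂, rfl⟩ ⟨δ m₁, hδA m₁, hδy m₁, rfl⟩
  have hne : x m₂ - x m₁ ≠ 0 := by
    intro h0
    have hlog : Real.log (η.1 j j) = Real.log (η.1 i i) := by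
      rw [hηe, hηe, Real.log_div ((hδA m₂).2 j).ne' ((hδA m₁).2 j).ne',
        Real.log_div ((hδA m₂).2 i).ne' ((hδA m₁).2 i).ne']
      simp only [hx] at h0
      linarith
    have heq := Real.log_injOn_pos (hηA.2 j) (hηA.2 i) hlog
    obtain ⟨l, hl, hlk⟩ := exists_entry_eq hcoord hηA hηy hij heq.symm k
    linarith [hηl l hl]
  have habs : |x m₂ - x m₁| < ε := by
    have h := Int.abs_sub_lt_one_of_floor_eq_floor hfl.symm
    rw [← sub_div, abs_div, abs_of_pos hε, div_lt_one hε] at h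
    exact h
  rcases abs_choice (x m₂ - x m₁) with h | h
  · exact ⟨|x m₂ - x m₁|, by rw [h]; exact hmem, abs_pos.2 hne, habs⟩
  · exact ⟨|x m₂ - x m₁|, by rw [h]; exact neg_mem hmem, abs_pos.2 hne, habs⟩

/-! ### Producing and excluding root group elements -/

lemma continuous_transvection {n : ℕ} (i j : Fin n) :
    Continuous fun s : ℝ => Matrix.transvection i j s := by
  refine continuous_matrix fun r c => ?_
  simp only [Matrix.transvection, Matrix.add_apply, Matrix.single_apply]
  split_ifs <;> fun_prop

/-- Conjugating a nondiagonal `h` close to the identity by a suitable element of the stabiliser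
makes its largest off-diagonal entry of size about `1`, while all others remain small. The diagonal
element that one approximates has entries `e ^ (-1/2)` and `e ^ (1/2)` at the column and the row of
the entry of largest modulus `e`. -/
lemma exists_conj_near {n : ℕ} {X : Type*} [SMul (SLR n) X] {y : X}
    {C : ℝ} (hC : 1 ≤ C)
    (hnear : ∀ a ∈ diagGroup n, ∃ δ ∈ diagGroup n, δ • y = y ∧
      ∀ k, δ.1 k k ≤ C * a.1 k k ∧ a.1 k k ≤ C * δ.1 k k)
    {ε : ℝ} (hε2 : ε ≤ 1) {h : SLR n} (hA : h ∉ diagGroup n)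
    (hclose : ∀ i j, |h.1 i j - (1 : Matrix (Fin n) (Fin n) ℝ) i j| < ε) :
    ∃ δ ∈ diagGroup n, δ • y = y ∧ ∃ i j, i ≠ j ∧
      (C ^ 2)⁻¹ ≤ |(δ⁻¹ * (h * δ)).1 i j| ∧ |(δ⁻¹ * (h * δ)).1 i j| ≤ C ^ 2 ∧
      (∀ a b, a ≠ b → (a, b) ≠ (i, j) → |(δ⁻¹ * (h * δ)).1 a b| < C ^ 2 * Real.sqrt ε) ∧
      ∀ a, (δ⁻¹ * (h * δ)).1 a a = h.1 a a := by
  have hC0 : 0 < C := by linarith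
  have hoff : ∀ i j, i ≠ j → |h.1 i j| < ε := fun i j hij => by
    simpa [Matrix.one_apply_ne hij] using hclose i j
  have hon : ∀ i, |h.1 i i - 1| < ε := fun i => by simpa using hclose i i
  let f : Fin n × Fin n → ℝ := fun p => if p.1 = p.2 then 0 else |h.1 p.1 p.2|
  obtain ⟨⟨i₁, j₁⟩, hij₁, hne₁⟩ : ∃ p : Fin n × Fin n, p.1 ≠ p.2 ∧ h.1 p.1 p.2 ≠ 0 := by
    by_contra! hall
    refine hA ⟨fun i j hij => hall (i, j) hij, fun i => ?_⟩
    linarith [(abs_lt.1 (hon i)).1]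
  have : Nonempty (Fin n × Fin n) := ⟨(i₁, j₁)⟩
  obtain ⟨⟨i, j⟩, hmax⟩ := Finite.exists_max f
  have hfpos : 0 < f (i, j) := lt_of_lt_of_le (by simpa [f, hij₁] using hne₁) (hmax (i₁, j₁))
  have hij : i ≠ j := by
    intro h'
    simp [f, h'] at hfpos
  set e := |h.1 i j| with he
  have hfe : f (i, j) = e := by simp [f, hij, he]
  rw [hfe] at hfpos
  have hmax' : ∀ r c, r ≠ c → |h.1 r c| ≤ e := fun r c hrc => by
    have := hmax (r, c)
    rw [hfe] at this
    simpa [f, hrc] using this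
  set r := Real.sqrt e with hr
  have hr0 : 0 < r := Real.sqrt_pos.2 hfpos
  have hrr : r * r = e := Real.mul_self_sqrt hfpos.le
  have hr1 : r ≤ 1 := by
    have := hoff i j hij
    nlinarith
  set d : Fin n → ℝ := fun k => (if k = j then r⁻¹ else 1) * (if k = i then r else 1) with hd
  have hdprod : ∏ k, d k = 1 := by
    simp only [hd, Finset.prod_mul_distrib, Finset.prod_ite_eq', Finset.mem_univ, if_true]
    exact inv_mul_cancel₀ hr0.ne'
  have hdpos : ∀ k, 0 < d k := fun k => by
    simp only [hd]; split_ifs <;> positivity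
  have hdi : d i = r := by simp [hd, hij]
  have hdj : d j = r⁻¹ := by simp [hd, hij.symm]
  have hr1' : 1 ≤ r⁻¹ := (one_le_inv₀ hr0).2 hr1
  have hdle : ∀ k, k ≠ j → d k ≤ 1 := fun k hk => by
    simp only [hd, hk, if_false, one_mul]; split_ifs <;> linarith
  have hdge : ∀ k, k ≠ i → 1 ≤ d k := fun k hk => by
    simp only [hd, hk, if_false, mul_one]; split_ifs <;> linarith
  have hdle' : ∀ k, d k ≤ r⁻¹ := fun k => by
    by_cases hk : k = j
    · rw [hk, hdj]
    · exact (hdle k hk).trans hr1'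
  have hdge' : ∀ k, r ≤ d k := fun k => by
    by_cases hk : k = i
    · rw [hk, hdi]
    · exact hr1.trans (hdge k hk)
  obtain ⟨δ, hδA, hδy, hδ⟩ := hnear (diagOf d hdprod) (diagOf_mem d hdprod hdpos)
  simp only [diagOf_apply] at hδ
  set M : SLR n := δ⁻¹ * (h * δ) with hM
  have hMe : ∀ a b, M.1 a b = h.1 a b * (δ.1 b b / δ.1 a a) := fun a b => by
    rw [hM, diag_mul_apply (inv_mem hδA), mul_diag_apply hδA, inv_diag_apply hδA]
    field_simp
  have hratio : ∀ a b, δ.1 b b / δ.1 a a ≤ C ^ 2 * (d b / d a) := fun a b => by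
    have h1 := (hδ b).1
    have h2 := (hδ a).2
    have h3 := hδA.2 a
    rw [div_le_iff₀ h3]
    calc δ.1 b b ≤ C * d b := h1
      _ = C * d b * (d a / d a) := by rw [div_self (hdpos a).ne', mul_one]
      _ ≤ C * d b * ((C * δ.1 a a) / d a) := by
          have := hdpos a; have := hdpos b; gcongr
      _ = _ := by ring
  have hs : (C ^ 2)⁻¹ ≤ |M.1 i j| ∧ |M.1 i j| ≤ C ^ 2 := by
    have hpos : 0 < δ.1 j j / δ.1 i i := div_pos (hδA.2 j) (hδA.2 i)
    have h1 : |M.1 i j| ≤ C ^ 2 := by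
      rw [hMe, abs_mul, abs_of_pos hpos]
      calc e * (δ.1 j j / δ.1 i i) ≤ e * (C ^ 2 * (d j / d i)) := by
            gcongr; exact hratio i j
        _ = C ^ 2 := by rw [hdi, hdj, ← hrr]; field_simp
    have h2 : (C ^ 2)⁻¹ ≤ |M.1 i j| := by
      rw [hMe, abs_mul, abs_of_pos hpos]
      have h3 := hratio j i
      rw [hdi, hdj] at h3
      have h4 : δ.1 j j / δ.1 i i = (δ.1 i i / δ.1 j j)⁻¹ := (inv_div _ _).symm
      have h5 : 0 < δ.1 i i / δ.1 j j := div_pos (hδA.2 i) (hδA.2 j)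
      rw [h4]
      calc (C ^ 2)⁻¹ = e * (C ^ 2 * (r / r⁻¹))⁻¹ := by rw [← hrr]; field_simp
        _ ≤ e * (δ.1 i i / δ.1 j j)⁻¹ := by gcongr
    exact ⟨h2, h1⟩
  have hsmall : ∀ a b, a ≠ b → (a, b) ≠ (i, j) → |M.1 a b| < C ^ 2 * Real.sqrt ε := by
    intro a b hab hne
    have hdd : d b / d a ≤ r⁻¹ := by
      rw [div_le_iff₀ (hdpos a)]
      by_cases hb : b = j
      · have ha : a ≠ i := fun ha => hne (by rw [ha, hb])
        calc d b ≤ r⁻¹ * 1 := by rw [mul_one]; exact hdle' b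
          _ ≤ r⁻¹ * d a := by gcongr; exact hdge a ha
      · calc d b ≤ r⁻¹ * r := by rw [inv_mul_cancel₀ hr0.ne']; exact hdle b hb
          _ ≤ r⁻¹ * d a := by gcongr; exact hdge' a
    have hpos : 0 < δ.1 b b / δ.1 a a := div_pos (hδA.2 b) (hδA.2 a)
    rw [hMe, abs_mul, abs_of_pos hpos]
    calc |h.1 a b| * (δ.1 b b / δ.1 a a) ≤ e * (C ^ 2 * r⁻¹) := by
          refine mul_le_mul (hmax' a b hab) ((hratio a b).trans ?_) hpos.le hfpos.le
          gcongr
      _ = C ^ 2 * r := by rw [← hrr]; field_simp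
      _ < C ^ 2 * Real.sqrt ε := by
          have := Real.sqrt_lt_sqrt hfpos.le (hoff i j hij)
          gcongr
  refine ⟨δ, hδA, hδy, i, j, hij, hs.1, hs.2, hsmall, fun a => ?_⟩
  rw [hMe, div_self (hδA.2 a).ne', mul_one]

/-- If points `h • y` of `F` have `h` arbitrarily close to the identity and not diagonal, then `F`
contains `u • y` for a nontrivial element `u` of a root group.
Conjugates of such `h` by the stabiliser come arbitrarily close to a compact set of nontrivial root
group elements. -/
lemma exists_elemU_smul_mem {n : ℕ} {F : Set (SLR n ⧸ GammaZ n)} (hF : IsClosed F)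
    (hinv : ∀ a ∈ diagGroup n, ∀ z ∈ F, a • z ∈ F) {y : SLR n ⧸ GammaZ n}
    {C : ℝ} (hC : 1 ≤ C)
    (hnear : ∀ a ∈ diagGroup n, ∃ δ ∈ diagGroup n, δ • y = y ∧
      ∀ k, δ.1 k k ≤ C * a.1 k k ∧ a.1 k k ≤ C * δ.1 k k)
    (happrox : ∀ ε > 0, ∃ h : SLR n, h ∉ diagGroup n ∧
      (∀ i j, |h.1 i j - (1 : Matrix (Fin n) (Fin n) ℝ) i j| < ε) ∧ h • y ∈ F) :
    ∃ (i j : Fin n) (hij : i ≠ j) (s : ℝ), s ≠ 0 ∧ elemU n hij s • y ∈ F := by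
  by_contra! hcon
  have hC0 : 0 < C := by linarith
  let S : Set (Fin n → Fin n → ℝ) :=
    (fun g : SLR n => (g.1 : Fin n → Fin n → ℝ)) '' {g : SLR n | g • y ∈ F}
  have hS : IsClosed S := (isClosedEmbedding_val n).isClosedMap _
    (hF.preimage (show Continuous fun g : SLR n => g • y by fun_prop))
  let tv : Fin n → Fin n → ℝ → Fin n → Fin n → ℝ := fun i j s => Matrix.transvection i j s
  have htv : ∀ i j, Continuous (tv i j) := continuous_transvection
  let B : Set ℝ := Set.Icc (C ^ 2)⁻¹ (C ^ 2) ∪ Set.Icc (-C ^ 2) (-(C ^ 2)⁻¹)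
  have hB : IsCompact B := isCompact_Icc.union isCompact_Icc
  let P : Set (Fin n × Fin n) := {p | p.1 ≠ p.2}
  let T : Set (Fin n → Fin n → ℝ) := ⋃ p ∈ P, tv p.1 p.2 '' B
  have hT : IsCompact T := (Set.toFinite P).isCompact_biUnion fun p _ => hB.image (htv _ _)
  have hTS : T ⊆ Sᶜ := by
    rintro m hm ⟨M, hM, hMm⟩
    obtain ⟨⟨i, j⟩, hij, s, hs, hsm⟩ : ∃ p ∈ P, ∃ s ∈ B, tv p.1 p.2 s = m := by simpa [T] using hm
    refine hcon i j hij s ?_ ?_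
    · have hpos : 0 < (C ^ 2)⁻¹ := by positivity
      rcases hs with hs | hs
      · exact (hpos.trans_le hs.1).ne'
      · exact (hs.2.trans_lt (by linarith)).ne
    · have : M = elemU n hij s := Subtype.ext (hMm.trans hsm.symm)
      exact this ▸ hM
  obtain ⟨ρ, hρ, hρT⟩ := hT.exists_thickening_subset_open hS.isOpen_compl hTS
  set ε : ℝ := min (min ρ 1) ((ρ / C ^ 2) ^ 2) with hεdef
  have hε : 0 < ε := by positivity
  have hε1 : ε ≤ ρ := (min_le_left _ _).trans (min_le_left _ _)
  have hε2 : ε ≤ 1 := (min_le_left _ _).trans (min_le_right _ _)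
  have hε3 : ε ≤ (ρ / C ^ 2) ^ 2 := min_le_right _ _
  obtain ⟨h, hA, hclose, hhF⟩ := happrox ε hε
  obtain ⟨δ, hδA, hδy, i, j, hij, hs1, hs2, hsmall, hdiag⟩ := exists_conj_near hC hnear hε2 hA hclose
  set M : SLR n := δ⁻¹ * (h * δ) with hM
  have hMF : M • y ∈ F := by
    rw [hM, mul_smul, mul_smul, hδy]
    exact hinv _ (inv_mem hδA) _ hhF
  have hs : M.1 i j ∈ B := by
    rcases abs_cases (M.1 i j) with ⟨h3, _⟩ | ⟨h3, _⟩
    · left; constructor <;> linarith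
    · right; constructor <;> linarith
  have hsq : C ^ 2 * Real.sqrt ε ≤ ρ := by
    have h1 : Real.sqrt ε ≤ ρ / C ^ 2 := Real.sqrt_le_iff.2 ⟨by positivity, hε3⟩
    rw [le_div_iff₀ (by positivity)] at h1
    linarith
  have hdist : dist (show Fin n → Fin n → ℝ from M.1) (tv i j (M.1 i j)) < ρ := by
    rw [dist_pi_lt_iff hρ]
    intro a
    rw [dist_pi_lt_iff hρ]
    intro b
    rw [Real.dist_eq]
    simp only [tv, Matrix.transvection, Matrix.add_apply, Matrix.single_apply]
    by_cases hab : a = b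
    · subst hab
      have h1 : ¬(i = a ∧ j = a) := fun ⟨h1, h2⟩ => hij (h1.trans h2.symm)
      rw [hdiag, if_neg h1, Matrix.one_apply_eq, add_zero]
      have := hclose a a
      rw [Matrix.one_apply_eq] at this
      exact this.trans_le hε1
    · rw [Matrix.one_apply_ne hab, zero_add]
      by_cases hp : i = a ∧ j = b
      · rw [if_pos hp, hp.1, hp.2, sub_self, abs_zero]
        exact hρ
      · rw [if_neg hp, sub_zero]
        refine (hsmall a b hab fun h' => hp ?_).trans_le hsq
        rw [Prod.mk.injEq] at h'
        exact ⟨h'.1.symm, h'.2.symm⟩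
  have hMT : tv i j (M.1 i j) ∈ T := Set.mem_iUnion₂.2 ⟨(i, j), hij, Set.mem_image_of_mem _ hs⟩
  have hMth : (show Fin n → Fin n → ℝ from M.1) ∈ Metric.thickening ρ T :=
    Metric.mem_thickening_iff.2 ⟨tv i j (M.1 i j), hMT, hdist⟩
  have hMS : (show Fin n → Fin n → ℝ from M.1) ∈ S := ⟨M, hMF, rfl⟩
  exact hρT hMth hMS

/-- A lattice `g ℤⁿ` contains vectors for which the product of two given coordinates has a
prescribed sign. -/
lemma exists_int_vec_sign {n : ℕ} (g : SLR n) {i j : Fin n} (hij : i ≠ j) {s : ℝ} (hs : s ≠ 0) :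
    ∃ v : Fin n → ℤ, s * (g.1 *ᵥ fun k => (v k : ℝ)) i * (g.1 *ᵥ fun k => (v k : ℝ)) j < 0 := by
  have hdense : DenseRange (fun q : Fin n → ℚ => fun k => (q k : ℝ)) :=
    DenseRange.piMap fun _ => Rat.denseRange_cast
  have hopen : IsOpen {x : Fin n → ℝ | s * (g.1 *ᵥ x) i * (g.1 *ᵥ x) j < 0} := by
    refine isOpen_lt ?_ continuous_const
    simp only [Matrix.mulVec, dotProduct]
    fun_prop
  have hne : {x : Fin n → ℝ | s * (g.1 *ᵥ x) i * (g.1 *ᵥ x) j < 0}.Nonempty := by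
    let w : Fin n → ℝ := fun k => if k = i then -s else 1
    have hw : g.1 *ᵥ ((g⁻¹).1 *ᵥ w) = w := by
      rw [Matrix.mulVec_mulVec, ← Matrix.SpecialLinearGroup.coe_mul, mul_inv_cancel,
        Matrix.SpecialLinearGroup.coe_one, Matrix.one_mulVec]
    refine ⟨(g⁻¹).1 *ᵥ w, ?_⟩
    rw [Set.mem_ofPred_eq, hw]
    simp only [w, if_true, hij.symm, if_false]
    have := mul_self_pos.2 hs
    linarith
  obtain ⟨q, hq⟩ := hdense.exists_mem_open hopen hne
  obtain ⟨b, hb⟩ := IsLocalization.exist_integer_multiples_of_finite (nonZeroDivisors ℤ) q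
  choose v hv using hb
  have hb0 : (b : ℤ) ≠ 0 := nonZeroDivisors.coe_ne_zero b
  have hvq : (fun k => (v k : ℝ)) = ((b : ℤ) : ℝ) • fun k => (q k : ℝ) := by
    ext k
    have h := hv k
    simp only [algebraMap_int_eq, eq_intCast, zsmul_eq_mul] at h
    simp only [Pi.smul_apply, smul_eq_mul]
    exact_mod_cast h
  refine ⟨v, ?_⟩
  rw [hvq, Matrix.mulVec_smul]
  simp only [Pi.smul_apply, smul_eq_mul]
  have h1 : 0 < ((b : ℤ) : ℝ) * ((b : ℤ) : ℝ) := mul_self_pos.2 (by exact_mod_cast hb0)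
  have h2 := mul_neg_of_pos_of_neg h1 hq
  linarith

/-- For `n ≥ 3`, a compact diagonal-invariant set that contains a point `y` whose stabiliser is
cocompact in the diagonal group contains no `u • y` with `u` a nontrivial element of a root group.
By density of the root values it would
contain a half-line `u(s) • y`, and some `u(s)` moves a lattice vector to a coordinate
hyperplane. -/
lemma elemU_smul_notMem {n : ℕ} (hn : 3 ≤ n) {F : Set (SLR n ⧸ GammaZ n)} (hF : IsCompact F)
    (hinv : ∀ a ∈ diagGroup n, ∀ z ∈ F, a • z ∈ F) {g : SLR n}
    (hg : (g : SLR n ⧸ GammaZ n) ∈ F) {C : ℝ} (hC : 1 ≤ C)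
    (hnear : ∀ a ∈ diagGroup n, ∃ δ ∈ diagGroup n, δ • (g : SLR n ⧸ GammaZ n) = g ∧
      ∀ k, δ.1 k k ≤ C * a.1 k k ∧ a.1 k k ≤ C * δ.1 k k)
    {i j : Fin n} (hij : i ≠ j) {s : ℝ} (hs : s ≠ 0) :
    elemU n hij s • (g : SLR n ⧸ GammaZ n) ∉ F := by
  intro hmem
  have hcoord : ∀ v : Fin n → ℤ, v ≠ 0 → ∀ i, (g.1 *ᵥ fun k => (v k : ℝ)) i ≠ 0 :=
    fun v hv i => coord_ne_zero hF hinv hg hv i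
  have hdense := dense_rootValues hn hcoord hC hnear hij
  have hcont : Continuous fun t : ℝ => elemU n hij (s * Real.exp t) • (g : SLR n ⧸ GammaZ n) := by
    have h1 : Continuous fun t : ℝ => elemU n hij (s * Real.exp t) := by
      refine continuous_induced_rng.2 ?_
      exact (continuous_transvection i j).comp (by fun_prop)
    fun_prop
  have hall : ∀ t : ℝ, elemU n hij (s * Real.exp t) • (g : SLR n ⧸ GammaZ n) ∈ F := by
    have hcl : IsClosed ((fun t : ℝ => elemU n hij (s * Real.exp t) •
        (g : SLR n ⧸ GammaZ n)) ⁻¹' F) := hF.isClosed.preimage hcont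
    have hsub : (rootValues (g : SLR n ⧸ GammaZ n) i j : Set ℝ) ⊆
        ((fun t : ℝ => elemU n hij (s * Real.exp t) • (g : SLR n ⧸ GammaZ n)) ⁻¹' F) := by
      rintro _ ⟨δ, hδA, hδy, rfl⟩
      have hconj : elemU n hij (s * Real.exp (Real.log (δ.1 j j) - Real.log (δ.1 i i))) =
          δ⁻¹ * (elemU n hij s * δ) := by
        rw [Real.exp_sub, Real.exp_log (hδA.2 j), Real.exp_log (hδA.2 i)]
        refine Matrix.SpecialLinearGroup.ext _ _ fun a b => ?_
        rw [diag_mul_apply (inv_mem hδA), mul_diag_apply hδA, inv_diag_apply hδA]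
        change (Matrix.transvection i j _) a b = _ * ((Matrix.transvection i j s) a b * _)
        have hda := (hδA.2 a).ne'
        simp only [Matrix.transvection, Matrix.add_apply, Matrix.single_apply]
        by_cases hab : a = b
        · subst hab
          have h1 : ¬(i = a ∧ j = a) := fun ⟨h1, h2⟩ => hij (h1.trans h2.symm)
          simp [h1, hda]
        · rw [Matrix.one_apply_ne hab]
          by_cases hp : i = a ∧ j = b
          · obtain ⟨rfl, rfl⟩ := hp
            simp only [and_self, if_true, zero_add]
            field_simp
          · simp [hp]
      change elemU n hij _ • (g : SLR n ⧸ GammaZ n) ∈ F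
      rw [hconj, mul_smul, mul_smul, hδy]
      exact hinv _ (inv_mem hδA) _ hmem
    intro t
    exact (hcl.closure_subset_iff.2 hsub) (hdense t)
  obtain ⟨v, hv⟩ := exists_int_vec_sign g hij hs
  set w := g.1 *ᵥ fun k => (v k : ℝ) with hw
  have hwj : w j ≠ 0 := by
    intro h; rw [h, mul_zero] at hv; exact lt_irrefl _ hv
  have hv0 : v ≠ 0 := by
    rintro rfl
    apply hwj
    simp [hw, Matrix.mulVec, dotProduct]
  -- the parameter at which the `i`-th coordinate of the lattice vector vanishes
  have hpos : 0 < -(w i / w j) / s := by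
    have h1 : -(w i / w j) / s = -(s * w i * w j) / (s * w j) ^ 2 := by field_simp
    rw [h1]
    have : 0 < (s * w j) ^ 2 := by positivity
    exact div_pos (by linarith) this
  have hF' := hall (Real.log (-(w i / w j) / s))
  rw [Real.exp_log hpos, mul_div_cancel₀ _ hs] at hF'
  refine coord_ne_zero hF hinv (g := elemU n hij (-(w i / w j)) * g) hF' hv0 i ?_
  rw [Matrix.SpecialLinearGroup.coe_mul, ← Matrix.mulVec_mulVec, ← hw]
  change ((Matrix.transvection i j (-(w i / w j))) *ᵥ w) i = 0
  rw [Matrix.transvection, Matrix.add_mulVec, Matrix.one_mulVec, Pi.add_apply,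
    Matrix.single_mulVec]
  simp [hwj]

/-! ### Orbit closures and minimal sets -/

lemma smul_mem_closure_orbit {n : ℕ} {x : SLR n ⧸ GammaZ n} {a : SLR n} (ha : a ∈ diagGroup n)
    {z : SLR n ⧸ GammaZ n} (hz : z ∈ closure ((· • x) '' posDiag n)) :
    a • z ∈ closure ((· • x) '' posDiag n) := by
  refine map_mem_closure (f := fun w => a • w) (continuous_const_smul a) hz ?_
  rintro _ ⟨b, hb, rfl⟩
  exact ⟨a * b, (diagGroup n).mul_mem ha hb, mul_smul a b x⟩

lemma mem_orbit_self {n : ℕ} (x : SLR n ⧸ GammaZ n) : x ∈ (· • x) '' posDiag n :=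
  ⟨1, (diagGroup n).one_mem, one_smul _ x⟩

lemma orbit_subset {n : ℕ} {K : Set (SLR n ⧸ GammaZ n)}
    (hinv : ∀ a ∈ diagGroup n, ∀ z ∈ K, a • z ∈ K) {x : SLR n ⧸ GammaZ n} (hx : x ∈ K) :
    (· • x) '' posDiag n ⊆ K := by
  rintro _ ⟨a, ha, rfl⟩
  exact hinv a ha x hx

lemma exists_minimal_subset {n : ℕ} {F : Set (SLR n ⧸ GammaZ n)} (hF : IsCompact F)
    (hne : F.Nonempty) (hinv : ∀ a ∈ diagGroup n, ∀ z ∈ F, a • z ∈ F) :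
    ∃ Z ⊆ F, IsCompact Z ∧ IsMinimalOn (posDiag n) Z := by
  obtain ⟨Z, hZF, hZ⟩ := zorn_superset_nonempty
    {K : Set (SLR n ⧸ GammaZ n) | IsCompact K ∧ K.Nonempty ∧
      ∀ a ∈ diagGroup n, ∀ z ∈ K, a • z ∈ K} (fun c hc hchain hcne => by
        refine ⟨⋂₀ c, ⟨?_, ?_, ?_⟩, fun s hs => Set.sInter_subset_of_mem hs⟩
        · obtain ⟨K, hK⟩ := hcne
          exact (hc hK).1.of_isClosed_subset
            (isClosed_sInter fun s hs => (hc hs).1.isClosed) (Set.sInter_subset_of_mem hK)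
        · exact IsCompact.nonempty_sInter_of_directed_nonempty_isCompact_isClosed
            (hS := hcne.to_subtype)
            (fun s hs t ht => (hchain.total hs ht).elim (fun h => ⟨s, hs, subset_rfl, h⟩)
              fun h => ⟨t, ht, h, subset_rfl⟩) (fun s hs => (hc hs).2.1)
            (fun s hs => (hc hs).1) (fun s hs => (hc hs).1.isClosed)
        · intro a ha z hz s hs
          exact (hc hs).2.2 a ha z (hz s hs)) F ⟨hF, hne, hinv⟩
  obtain ⟨⟨hZc, hZne, hZinv⟩, hmin⟩ := hZ
  refine ⟨Z, hZF, hZc, hZne, fun a ha => ?_, fun z hz => ?_⟩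
  · refine Set.Subset.antisymm (Set.image_subset_iff.2 fun z hz => hZinv a ha z hz) fun z hz => ?_
    exact ⟨a⁻¹ • z, hZinv _ ((diagGroup n).inv_mem ha) z hz, smul_inv_smul a z⟩
  · have hsub : closure ((· • z) '' posDiag n) ⊆ Z :=
      closure_minimal (orbit_subset hZinv hz) hZc.isClosed
    exact hmin ⟨hZc.of_isClosed_subset isClosed_closure hsub,
      ⟨z, subset_closure (mem_orbit_self z)⟩,
      fun a ha w hw => smul_mem_closure_orbit ha hw⟩ hsub

/-- A point of `closure S` is moved into `S` by group elements arbitrarily close to `1`, because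
`SL_n(ℝ) → SL_n(ℝ)/SL_n(ℤ)` is open. -/
lemma exists_near_one_smul_mem {n : ℕ} {S : Set (SLR n ⧸ GammaZ n)} {y : SLR n ⧸ GammaZ n}
    (hy : y ∈ closure S) {ε : ℝ} (hε : 0 < ε) :
    ∃ h : SLR n, (∀ i j, |h.1 i j - (1 : Matrix (Fin n) (Fin n) ℝ) i j| < ε) ∧ h • y ∈ S := by
  obtain ⟨g, rfl⟩ := QuotientGroup.mk_surjective y
  have hU : IsOpen {k : SLR n |
      ∀ i j, |(k * g⁻¹).1 i j - (1 : Matrix (Fin n) (Fin n) ℝ) i j| < ε} := by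
    simp only [Set.ofPred_forall]
    refine isOpen_iInter_of_finite fun i => isOpen_iInter_of_finite fun j => ?_
    refine isOpen_lt ?_ continuous_const
    have h1 : Continuous fun k : SLR n => (k * g⁻¹).1 i j :=
      (continuous_entry n i j).comp (continuous_mul_const g⁻¹)
    exact (h1.sub continuous_const).abs
  have hV := (QuotientGroup.isOpenQuotientMap_mk (N := GammaZ n)).isOpenMap _ hU
  have hgU : (g : SLR n ⧸ GammaZ n) ∈ (QuotientGroup.mk : SLR n → SLR n ⧸ GammaZ n) '' {k : SLR n |
      ∀ i j, |(k * g⁻¹).1 i j - (1 : Matrix (Fin n) (Fin n) ℝ) i j| < ε} := by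
    refine ⟨g, fun i j => ?_, rfl⟩
    rw [mul_inv_cancel]
    change |(1 : Matrix (Fin n) (Fin n) ℝ) i j - _| < ε
    simpa using hε
  obtain ⟨_, ⟨k, hk, rfl⟩, hkS⟩ := mem_closure_iff.1 hy _ hV hgU
  refine ⟨k * g⁻¹, hk, ?_⟩
  have : (k * g⁻¹) • (g : SLR n ⧸ GammaZ n) = ((k * g⁻¹ * g : SLR n) : SLR n ⧸ GammaZ n) := rfl
  rwa [this, inv_mul_cancel_right]

/-- For `n ≥ 3`, a compact `A`-orbit is isolated: a relatively compact `A`-orbit accumulating on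
it coincides with it. -/
lemma mem_orbit_of_compact_orbit_subset {n : ℕ} (hn : 3 ≤ n) {x y : SLR n ⧸ GammaZ n}
    (hF : IsCompact (closure ((· • x) '' posDiag n)))
    (hy : y ∈ closure ((· • x) '' posDiag n)) (hyc : IsCompact ((· • y) '' posDiag n)) :
    x ∈ (· • y) '' posDiag n := by
  by_contra hx
  obtain ⟨C, hC, hnear⟩ := exists_stabilizer_near hyc
  have hinv : ∀ a ∈ diagGroup n, ∀ z ∈ closure ((· • x) '' posDiag n),
      a • z ∈ closure ((· • x) '' posDiag n) := fun a ha z hz => smul_mem_closure_orbit ha hz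
  obtain ⟨i, j, hij, s, hs, hmem⟩ :=
    exists_elemU_smul_mem isClosed_closure hinv hC hnear fun ε hε => by
      obtain ⟨h, hh, a, ha, hax⟩ := exists_near_one_smul_mem hy hε
      refine ⟨h, fun hd => hx ⟨a⁻¹ * h, (diagGroup n).mul_mem ((diagGroup n).inv_mem ha) hd, ?_⟩,
        hh, subset_closure ⟨a, ha, hax⟩⟩
      change (a⁻¹ * h) • y = x
      rw [mul_smul, ← hax]
      exact inv_smul_smul a x
  obtain ⟨g, rfl⟩ := QuotientGroup.mk_surjective y
  exact elemU_smul_notMem hn hF hinv hy hC hnear hij hs hmem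

/-- In `X = SL_n(ℝ)/SL_n(ℤ)`, `n ≥ 3`: every `A`-orbit with compact closure is closed
if and only if every compact `A`-minimal subset is a single compact `A`-orbit. -/
theorem statement_2 (n : ℕ) (hn : 3 ≤ n) :
    (∀ x : SLR n ⧸ GammaZ n,
      IsCompact (closure ((· • x) '' posDiag n)) → IsClosed ((· • x) '' posDiag n)) ↔
    (∀ Y : Set (SLR n ⧸ GammaZ n), IsCompact Y → IsMinimalOn (posDiag n) Y →
      ∃ x : SLR n ⧸ GammaZ n, Y = (· • x) '' posDiag n) := by
  constructor
  · intro hclosed Y hY hmin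
    obtain ⟨z, hz⟩ := hmin.1
    have hsub : (· • z) '' posDiag n ⊆ Y :=
      orbit_subset (fun a ha w hw => (hmin.2.1 a ha).subset ⟨w, hw, rfl⟩) hz
    have hcl : closure ((· • z) '' posDiag n) = Y :=
      Set.Subset.antisymm (closure_minimal hsub hY.isClosed) (hmin.2.2 z hz)
    refine ⟨z, ?_⟩
    rw [← hcl, (hclosed z (hcl.symm ▸ hY)).closure_eq]
  · intro hmin x hF
    obtain ⟨Z, hZF, hZc, hZ⟩ := exists_minimal_subset hF
      ⟨x, subset_closure (mem_orbit_self x)⟩ fun a ha z hz => smul_mem_closure_orbit ha hz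
    obtain ⟨y, rfl⟩ := hmin Z hZc hZ
    obtain ⟨b, hb, rfl⟩ := mem_orbit_of_compact_orbit_subset hn hF (hZF (mem_orbit_self y)) hZc
    have heq : (· • ((fun a : SLR n => a • y) b)) '' posDiag n = (· • y) '' posDiag n := by
      ext w
      constructor
      · rintro ⟨a, ha, rfl⟩
        exact ⟨a * b, (diagGroup n).mul_mem ha hb, mul_smul a b y⟩
      · rintro ⟨a, ha, rfl⟩
        refine ⟨a * b⁻¹, (diagGroup n).mul_mem ha ((diagGroup n).inv_mem hb), ?_⟩
        change (a * b⁻¹) • b • y = a • y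
        rw [smul_smul, inv_mul_cancel_right]
    rw [heq]
    exact hZc.isClosed
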